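/- arXiv:1304.8016 — 2 statements merged into one kernel-verified Lean document; each statement's English description precedes it below -/
import Mathlib

section
/- Let B_1, …, B_n be boxes with prescribed positive widths and heights and non-negative profits p_{ij}. Suppose there are k graphs C_1, …, C_k on the vertex set {1, …, n}, each a disjoint union of cycles of length at least 3, such that every pair {i, j} with p_{ij} > 0 is an edge of at least one C_ℓ. Then there exists a representation of the boxes whose total profit is at least (1/k) · Σ_{i<j} p_{ij}. -/
/-!
A single cycle of boxes `b₀, …, b_{m-1}` can always be realised with all `m` contacts: cut it
into two paths, put `b₀, …, b_{a-1}` side by side from left to right on top of the line `y = 0`,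
and hang `b_{m-1}, …, b_a` side by side from left to right below that line, the lower row being
shifted to the right by a small `c > 0`. The two leftmost boxes `b₀` and `b_{m-1}` then share a
segment of the line. With `P` the prefix sums of the widths and `W = P m`, the two rightmost boxes
`b_{a-1}` and `b_a` share one as soon as `P (a-1) + P a < W + c < P a + P (a+1)`; taking for `a`
the least index with `W < P a + P (a+1)`, such a `c` exists (`exists_cycle_layout`).

Laying out the cycles of a permutation in non-overlapping vertical strips realises all edges of a
disjoint union of cycles (`exists_perm_layout`). Since the `k` graphs cover all the profit, one of
them carries at least a `1/k` fraction of it, and realising that graph is enough.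
-/

open Set

/-- The closed axis-aligned box with bottom-left corner `pos`, width `w` and height `h`. -/
def pBox (pos : ℝ × ℝ) (w h : ℝ) : Set (ℝ × ℝ) :=
  Icc pos.1 (pos.1 + w) ×ˢ Icc pos.2 (pos.2 + h)

/-- The open interior of the axis-aligned box. -/
def pBoxInt (pos : ℝ × ℝ) (w h : ℝ) : Set (ℝ × ℝ) :=
  Ioo pos.1 (pos.1 + w) ×ˢ Ioo pos.2 (pos.2 + h)

/-- Two placed boxes touch if their intersection is a line segment of positive
length, i.e. the segment between two distinct points. -/
def Touches (A B : Set (ℝ × ℝ)) : Prop :=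
  ∃ p q : ℝ × ℝ, p ≠ q ∧ A ∩ B = segment ℝ p q

/-- A representation of boxes with prescribed widths `w` and heights `h`:
a choice of positions such that the open interiors are pairwise disjoint. -/
def IsRepresentation {ι : Type*} (w h : ι → ℝ) (pos : ι → ℝ × ℝ) : Prop :=
  Pairwise fun i j => Disjoint (pBoxInt (pos i) (w i) (h i)) (pBoxInt (pos j) (w j) (h j))

/-- `G` is a disjoint union of cycles, each of length at least `3`:
there is a permutation `σ` without `2`-cycles whose nontrivial orbits (which all have
length at least `3`) trace out exactly the edges of `G`. -/
def IsDisjointUnionOfCycles {n : ℕ} (G : SimpleGraph (Fin n)) : Prop :=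
  ∃ σ : Equiv.Perm (Fin n),
    (∀ v, σ v ≠ v → σ (σ v) ≠ v) ∧
    ∀ u v, G.Adj u v ↔ u ≠ v ∧ (σ u = v ∨ σ v = u)

open scoped Classical in
/-- The total profit of a representation: the sum of `p i j` over all unordered
pairs `{i, j}` whose boxes touch. -/
noncomputable def totalProfit {n : ℕ} (p : Fin n → Fin n → ℝ) (w h : Fin n → ℝ)
    (pos : Fin n → ℝ × ℝ) : ℝ :=
  ∑ i : Fin n, ∑ j : Fin n,
    if i < j ∧ Touches (pBox (pos i) (w i) (h i)) (pBox (pos j) (w j) (h j))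
    then p i j else 0

/-- Some vertical or horizontal line weakly separates the two boxes. -/
def BoxSep (P Q : ℝ × ℝ) (w h w' h' : ℝ) : Prop :=
  P.1 + w ≤ Q.1 ∨ Q.1 + w' ≤ P.1 ∨ P.2 + h ≤ Q.2 ∨ Q.2 + h' ≤ P.2

/-- Coordinate description of contact: the first box lies directly to the left of, or directly on
top of, the second one, and the projections to the other axis overlap in positive length. -/
def BoxContact (P Q : ℝ × ℝ) (w h w' h' : ℝ) : Prop :=
  (P.1 + w = Q.1 ∧ P.2 < Q.2 + h' ∧ Q.2 < P.2 + h) ∨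
  (Q.2 + h' = P.2 ∧ P.1 < Q.1 + w' ∧ Q.1 < P.1 + w)

lemma BoxSep.disjoint {P Q : ℝ × ℝ} {w h w' h' : ℝ} (H : BoxSep P Q w h w' h') :
    Disjoint (pBoxInt P w h) (pBoxInt Q w' h') := by
  rw [Set.disjoint_left]
  rintro ⟨x, y⟩ h1 h2
  simp only [pBoxInt, Set.mem_prod, Set.mem_Ioo] at h1 h2
  rcases H with H | H | H | H <;> linarith [h1.1.1, h1.1.2, h1.2.1, h1.2.2, h2.1.1, h2.1.2,
    h2.2.1, h2.2.2]

lemma Touches.symm {A B : Set (ℝ × ℝ)} (H : Touches A B) : Touches B A := by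
  obtain ⟨p, q, hpq, e⟩ := H
  exact ⟨p, q, hpq, by rw [Set.inter_comm, e]⟩

lemma BoxContact.touches {P Q : ℝ × ℝ} {w h w' h' : ℝ} (hw : 0 < w) (hh : 0 < h)
    (hw' : 0 < w') (hh' : 0 < h') (H : BoxContact P Q w h w' h') :
    Touches (pBox P w h) (pBox Q w' h') := by
  obtain ⟨x, y⟩ := P
  obtain ⟨x', y'⟩ := Q
  simp only [BoxContact] at H
  rcases H with ⟨e, h1, h2⟩ | ⟨e, h1, h2⟩
  · have hlt : max y y' < min (y + h) (y' + h') := by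
      simp only [max_lt_iff, lt_min_iff]
      refine ⟨⟨?_, ?_⟩, ?_, ?_⟩ <;> linarith
    refine ⟨(x', max y y'), (x', min (y + h) (y' + h')), ?_, ?_⟩
    · intro hc
      exact hlt.ne (Prod.mk.inj hc).2
    · rw [← Prod.image_mk_segment_right, segment_eq_Icc hlt.le]
      ext ⟨a, b⟩
      simp only [pBox, Set.mem_inter_iff, Set.mem_prod, Set.mem_Icc, Set.mem_image, Prod.mk.injEq,
        max_le_iff, le_min_iff]
      constructor
      · rintro ⟨⟨⟨a1, a2⟩, a3, a4⟩, ⟨a5, a6⟩, a7, a8⟩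
        exact ⟨b, ⟨⟨a3, a7⟩, a4, a8⟩, by linarith, rfl⟩
      · rintro ⟨b, ⟨⟨a3, a7⟩, a4, a8⟩, rfl, rfl⟩
        exact ⟨⟨⟨by linarith, by linarith⟩, a3, a4⟩, ⟨le_rfl, by linarith⟩, a7, a8⟩
  · have hlt : max x x' < min (x + w) (x' + w') := by
      simp only [max_lt_iff, lt_min_iff]
      refine ⟨⟨?_, ?_⟩, ?_, ?_⟩ <;> linarith
    refine ⟨(max x x', y), (min (x + w) (x' + w'), y), ?_, ?_⟩
    · intro hc
      exact hlt.ne (Prod.mk.inj hc).1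
    · rw [← Prod.image_mk_segment_left, segment_eq_Icc hlt.le]
      ext ⟨a, b⟩
      simp only [pBox, Set.mem_inter_iff, Set.mem_prod, Set.mem_Icc, Set.mem_image, Prod.mk.injEq,
        max_le_iff, le_min_iff]
      constructor
      · rintro ⟨⟨⟨a1, a2⟩, a3, a4⟩, ⟨a5, a6⟩, a7, a8⟩
        exact ⟨a, ⟨⟨a1, a5⟩, a2, a6⟩, rfl, by linarith⟩
      · rintro ⟨b, ⟨⟨a3, a7⟩, a4, a8⟩, rfl, rfl⟩
        exact ⟨⟨⟨a3, a4⟩, le_rfl, by linarith⟩, ⟨a7, a8⟩, by linarith, by linarith⟩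

/-- A cyclic sequence of `m` boxes has a layout to the right of the `y`-axis in which consecutive
boxes are in contact. -/
lemma exists_cycle_layout (m : ℕ) (w h : ℕ → ℝ) (hw : ∀ i, 0 < w i) (hh : ∀ i, 0 < h i) :
    ∃ pos : ℕ → ℝ × ℝ, (∀ i < m, 0 ≤ (pos i).1) ∧
      (∀ i < m, ∀ j < m, i ≠ j → BoxSep (pos i) (pos j) (w i) (h i) (w j) (h j)) ∧
      (∀ i, i + 1 < m →
        BoxContact (pos i) (pos (i + 1)) (w i) (h i) (w (i + 1)) (h (i + 1)) ∨
        BoxContact (pos (i + 1)) (pos i) (w (i + 1)) (h (i + 1)) (w i) (h i)) ∧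
      (2 ≤ m → BoxContact (pos 0) (pos (m - 1)) (w 0) (h 0) (w (m - 1)) (h (m - 1))) := by
  rcases Nat.lt_or_ge m 2 with hm | hm
  · refine ⟨fun _ => 0, fun _ _ => le_rfl, ?_, ?_, ?_⟩
    · intro i hi j hj hij; omega
    · intro i hi; omega
    · intro hi; omega
  obtain ⟨q, rfl⟩ : ∃ q, m = q + 1 := ⟨m - 1, by omega⟩
  set P : ℕ → ℝ := fun a => ∑ i ∈ Finset.range a, w i with hP
  have P0 : P 0 = 0 := by simp [hP]
  have Ps : ∀ i, P (i + 1) = P i + w i := fun i => Finset.sum_range_succ _ _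
  have Pm : Monotone P := monotone_nat_of_le_succ fun i => by rw [Ps]; linarith [hw i]
  have Pq : 0 < P q := by
    have h1 := Pm (show 1 ≤ q by omega)
    have h2 := Ps 0
    have h3 := hw 0
    norm_num at h2
    linarith
  have hex : ∃ a, P (q + 1) < P a + P (a + 1) := ⟨q, by linarith⟩
  obtain ⟨a, ha, hmin⟩ : ∃ a, P (q + 1) < P a + P (a + 1) ∧
      ∀ b < a, ¬ P (q + 1) < P b + P (b + 1) :=
    ⟨Nat.find hex, Nat.find_spec hex, fun b hb => Nat.find_min hex hb⟩
  have haq : a ≤ q := by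
    by_contra hc
    exact hmin q (by omega) (by linarith)
  have ha0 : a ≠ 0 := by
    rintro rfl
    have := Pm (show 0 + 1 ≤ q + 1 by omega)
    linarith
  obtain ⟨c, hc0, hc⟩ : ∃ c, 0 < c ∧ c < min (w 0) (P a + P (a + 1) - P (q + 1)) :=
    exists_between (lt_min (hw 0) (by linarith))
  obtain ⟨hcw, hcf⟩ := lt_min_iff.1 hc
  refine ⟨fun i => if i < a then (P i, 0) else (c + P (q + 1) - P (i + 1), - h i), ?_, ?_, ?_, ?_⟩
  · intro i hi
    have h1 := Pm (show 0 ≤ i by omega)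
    have h2 := Pm (show i + 1 ≤ q + 1 by omega)
    dsimp only
    split_ifs <;> dsimp only <;> linarith
  · intro i hi j hj hij
    have key : i < j → P (i + 1) ≤ P j := fun h => Pm h
    have key' : j < i → P (j + 1) ≤ P i := fun h => Pm h
    have e1 := Ps i
    have e2 := Ps j
    simp only [BoxSep]
    split_ifs with h1 h2 h2
    · rcases lt_or_gt_of_ne hij with h | h
      · left; dsimp only; linarith [key h]
      · right; left; dsimp only; linarith [key' h]
    · right; right; right; dsimp only; linarith
    · right; right; left; dsimp only; linarith
    · rcases lt_or_gt_of_ne hij with h | h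
      · right; left; dsimp only; linarith [key h]
      · left; dsimp only; linarith [key' h]
  · intro i hi
    have e1 := Ps i
    have e2 := Ps (i + 1)
    have p1 := hh i
    have p2 := hh (i + 1)
    simp only [BoxContact]
    split_ifs with h1 h2 h2
    · left; left; dsimp only; refine ⟨?_, ?_, ?_⟩ <;> linarith
    · have hia : a = i + 1 := by omega
      -- contact at the right end of the two rows: minimality of `a` gives `P i + P (i+1) ≤ P (q+1)`
      subst hia
      have h3 := hmin i (by omega)
      left; right; dsimp only; refine ⟨?_, ?_, ?_⟩ <;> linarith
    · omega
    · right; left; dsimp only; refine ⟨?_, ?_, ?_⟩ <;> linarith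
  · intro _
    have e1 := Ps q
    have p1 := hw q
    simp only [BoxContact, Nat.add_sub_cancel]
    rw [if_pos (show 0 < a by omega), if_neg (show ¬ q < a by omega)]
    right; dsimp only; refine ⟨?_, ?_, ?_⟩ <;> linarith

/-- The boxes can be represented so that `v` and `σ v` touch whenever `σ` moves `v`. -/
lemma exists_perm_layout {n : ℕ} (w h : Fin n → ℝ) (hw : ∀ i, 0 < w i) (hh : ∀ i, 0 < h i)
    (σ : Equiv.Perm (Fin n)) :
    ∃ pos : Fin n → ℝ × ℝ, IsRepresentation w h pos ∧
      ∀ v, σ v ≠ v → Touches (pBox (pos v) (w v) (h v)) (pBox (pos (σ v)) (w (σ v)) (h (σ v))) := by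
  -- `rep` picks one point in each cycle of `σ`, and `idx v` is the position of `v` counted from it
  obtain ⟨rep, hrep, hrepσ⟩ : ∃ rep : Fin n → Fin n, (∀ v, σ.SameCycle (rep v) v) ∧
      ∀ v, rep (σ v) = rep v := by
    let S := Equiv.Perm.SameCycle.setoid σ
    refine ⟨fun v => (Quotient.mk S v).out, fun v => ?_, fun v => ?_⟩
    · exact Quotient.exact (s := S) (Quotient.out_eq (Quotient.mk S v))
    have : Quotient.mk S (σ v) = Quotient.mk S v :=
      Quotient.sound (show σ.SameCycle (σ v) v from
        Equiv.Perm.sameCycle_apply_left.2 (Equiv.Perm.SameCycle.refl _ _))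
    simp only [this]
  set m : Fin n → ℕ := fun r => Function.minimalPeriod σ r with hm
  have hper : ∀ r, 0 < m r := fun r =>
    Function.minimalPeriod_pos_of_mem_periodicPts (σ.injective.mem_periodicPts r)
  have hidx : ∀ v, ∃ i, i < m (rep v) ∧ σ^[i] (rep v) = v := by
    intro v
    obtain ⟨i, -, hi⟩ := (hrep v).exists_pow_eq'
    refine ⟨i % m (rep v), Nat.mod_lt _ (hper _), ?_⟩
    rw [hm, Function.iterate_mod_minimalPeriod_eq, ← Equiv.Perm.coe_pow, hi]
  choose idx hidx1 hidx2 using hidx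
  choose Q hQ0 hQs hQc hQl using fun r : Fin n =>
    exists_cycle_layout (m r) (fun i => w (σ^[i] r)) (fun i => h (σ^[i] r))
      (fun _ => hw _) (fun _ => hh _)
  set X : Fin n → ℝ × ℝ := fun v => Q (rep v) (idx v) with hX
  have hX0 : ∀ v, 0 ≤ (X v).1 := fun v => hQ0 _ _ (hidx1 v)
  -- all the cycle layouts fit into a vertical strip of width `D`
  set D : ℝ := ∑ v, ((X v).1 + w v) with hD
  have hDle : ∀ v, (X v).1 + w v ≤ D := fun v =>
    Finset.single_le_sum (f := fun v => (X v).1 + w v)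
      (fun u _ => add_nonneg (hX0 u) (hw u).le) (Finset.mem_univ v)
  have hstrip : ∀ u v, rep u < rep v →
      (X u).1 + ((rep u : ℕ) : ℝ) * D + w u ≤ (X v).1 + ((rep v : ℕ) : ℝ) * D := by
    intro u v huv
    have h1 : ((rep u : ℕ) : ℝ) + 1 ≤ ((rep v : ℕ) : ℝ) := by exact_mod_cast huv
    have hDpos : 0 ≤ D := by linarith [hDle u, hX0 u, hw u]
    have h2 := mul_le_mul_of_nonneg_right h1 hDpos
    linarith [hDle u, hX0 v]
  refine ⟨fun v => ((X v).1 + ((rep v : ℕ) : ℝ) * D, (X v).2), ?_, ?_⟩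
  · intro u v huv
    apply BoxSep.disjoint
    rcases lt_trichotomy (rep u) (rep v) with hlt | heq | hlt
    · exact Or.inl (hstrip u v hlt)
    · have hne : idx u ≠ idx v := by
        intro hc
        apply huv
        rw [← hidx2 u, ← hidx2 v, heq, hc]
      have hs := hQs (rep u) (idx u) (hidx1 u) (idx v) (heq ▸ hidx1 v) hne
      simp only [hidx2 u] at hs
      rw [heq, hidx2 v, ← heq] at hs
      simp only [BoxSep, hX, ← heq] at hs ⊢
      rcases hs with hs | hs | hs | hs
      · left; linarith
      · right; left; linarith
      · right; right; left; linarith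
      · right; right; right; linarith
    · exact Or.inr (Or.inl (hstrip v u hlt))
  · intro v hv
    -- contact is invariant under translation by the offset of the strip
    have shift : ∀ {A B : ℝ × ℝ} {a b c d t : ℝ}, BoxContact A B a b c d →
        BoxContact (A.1 + t, A.2) (B.1 + t, B.2) a b c d := by
      intro A B a b c d t H
      rcases H with ⟨h1, h2, h3⟩ | ⟨h1, h2, h3⟩
      · left; exact ⟨by dsimp only; linarith, h2, h3⟩
      · right; exact ⟨h1, by dsimp only; linarith, by dsimp only; linarith⟩
    have hinj : ∀ i < m (rep v), σ^[i] (rep v) = σ v → idx (σ v) = i := by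
      intro i hi hiv
      have h1 := hidx1 (σ v)
      have h2 := hidx2 (σ v)
      rw [hrepσ] at h1 h2
      exact (Function.iterate_eq_iterate_iff_of_lt_minimalPeriod h1 hi).1 (h2.trans hiv.symm)
    have hnext : σ^[idx v + 1] (rep v) = σ v := by
      rw [Function.iterate_succ_apply', hidx2]
    have hlt := hidx1 v
    rcases Nat.lt_or_ge (idx v + 1) (m (rep v)) with hlt' | hge
    · have hi := hinj _ hlt' hnext
      have hc := hQc (rep v) (idx v) hlt'
      simp only [hidx2, hnext] at hc
      simp only [hX, hrepσ, hi]
      rcases hc with hc | hc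
      · exact (shift hc).touches (hw _) (hh _) (hw _) (hh _)
      · exact ((shift hc).touches (hw _) (hh _) (hw _) (hh _)).symm
    · have hmv : m (rep v) = idx v + 1 := by omega
      have hr : rep v = σ v := by
        rw [← hnext, ← hmv]
        exact (Function.iterate_minimalPeriod (f := σ) (x := rep v)).symm
      have hi : idx (σ v) = 0 := hinj 0 (hper _) hr
      have h2 : 2 ≤ m (rep v) := by
        by_contra hlt2
        have h0 : idx v = 0 := by omega
        have := hidx2 v
        rw [h0] at this
        exact hv (hr.symm.trans this)
      have hc := hQl (rep v) h2
      have e : m (rep v) - 1 = idx v := by omega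
      have e0 : σ^[0] (rep v) = σ v := hr
      simp only [e, hidx2, e0] at hc
      simp only [hX, hrepσ, hi]
      exact ((shift hc).touches (hw _) (hh _) (hw _) (hh _)).symm

/-- If the pairs of positive profit are covered by `k` graphs, each a disjoint union of
cycles of length at least `3`, then there is a representation with total profit at least
`(1/k) · Σ_{i<j} p i j`. -/
theorem cycleCover_approximation (n k : ℕ) (hk : 1 ≤ k)
    (w h : Fin n → ℝ) (hw : ∀ i, 0 < w i) (hh : ∀ i, 0 < h i)
    (p : Fin n → Fin n → ℝ) (hsym : ∀ i j, p i j = p j i) (hp : ∀ i j, 0 ≤ p i j)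
    (C : Fin k → SimpleGraph (Fin n)) (hC : ∀ ℓ, IsDisjointUnionOfCycles (C ℓ))
    (hcover : ∀ i j : Fin n, i ≠ j → 0 < p i j → ∃ ℓ, (C ℓ).Adj i j) :
    ∃ pos : Fin n → ℝ × ℝ, IsRepresentation w h pos ∧
      (1 / (k : ℝ)) * (∑ i : Fin n, ∑ j : Fin n, if i < j then p i j else 0) ≤
        totalProfit p w h pos := by
  classical
  -- `S ℓ` is the profit carried by the graph `C ℓ`
  set S : Fin k → ℝ := fun ℓ => ∑ i : Fin n, ∑ j : Fin n,
    if i < j ∧ (C ℓ).Adj i j then p i j else 0 with hS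
  set T : ℝ := ∑ i : Fin n, ∑ j : Fin n, if i < j then p i j else 0 with hT
  have hk0 : (0 : ℝ) < k := by exact_mod_cast hk
  have hTS : T ≤ ∑ ℓ, S ℓ := by
    rw [hS, Finset.sum_comm]
    refine Finset.sum_le_sum fun i _ => ?_
    rw [Finset.sum_comm]
    refine Finset.sum_le_sum fun j _ => ?_
    have hnn : ∀ ℓ ∈ Finset.univ, 0 ≤ if i < j ∧ (C ℓ).Adj i j then p i j else 0 := by
      intro ℓ _
      split_ifs
      exacts [hp i j, le_rfl]
    split_ifs with hij
    · rcases (hp i j).eq_or_lt with h0 | h0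
      · rw [← h0]
        simp
      · obtain ⟨ℓ, hℓ⟩ := hcover i j hij.ne h0
        refine le_trans ?_ (Finset.single_le_sum hnn (Finset.mem_univ ℓ))
        rw [if_pos ⟨hij, hℓ⟩]
    · exact Finset.sum_nonneg hnn
  have : Nonempty (Fin k) := ⟨⟨0, hk⟩⟩
  obtain ⟨ℓ, -, hℓ⟩ : ∃ ℓ ∈ (Finset.univ : Finset (Fin k)), (1 / (k : ℝ)) * T ≤ S ℓ := by
    apply Finset.exists_le_of_sum_le Finset.univ_nonempty
    rw [Finset.sum_const, Finset.card_univ, Fintype.card_fin, nsmul_eq_mul, ← mul_assoc,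
      mul_one_div_cancel hk0.ne', one_mul]
    exact hTS
  obtain ⟨σ, -, hσ⟩ := hC ℓ
  obtain ⟨pos, hpos, htouch⟩ := exists_perm_layout w h hw hh σ
  refine ⟨pos, hpos, hℓ.trans ?_⟩
  refine Finset.sum_le_sum fun i _ => Finset.sum_le_sum fun j _ => ?_
  by_cases hij : i < j ∧ (C ℓ).Adj i j
  · have ht : Touches (pBox (pos i) (w i) (h i)) (pBox (pos j) (w j) (h j)) := by
      obtain ⟨hne, rfl | rfl⟩ := (hσ i j).1 hij.2
      · exact htouch i hne.symm
      · exact (htouch j hne).symm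
    rw [if_pos hij, if_pos ⟨hij.1, ht⟩]
  · rw [if_neg hij]
    split_ifs
    exacts [hp i j, le_rfl]
end

section
/- Let B_1, …, B_n be boxes with prescribed positive widths and heights and non-negative profits p_{ij}, and suppose the supporting graph (the graph on {1, …, n} whose edges are the pairs with p_{ij} > 0) has maximum degree at most Δ, where Δ ≥ 1. Then there exists a representation of the boxes whose total profit is at least (2/(Δ+1)) · Σ_{i<j} p_{ij}. -/
/-!
Let `k = ⌊(Δ + 1) / 2⌋`, so that the supporting graph has maximum degree at most `2k` and
`1 / k ≥ 2 / (Δ + 1)`. By a weighted form of Petersen's 2-factor theorem the graph contains a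
subgraph of maximum degree two, hence a disjoint union of paths and cycles, that carries at least
`1 / k` of the total profit (`exists_heavy_linear`). For this, the graph is completed to a
`2k`-regular multigraph, which Hall's theorem orients with all in- and out-degrees equal to `k`
(`exists_balanced_orientation`); by Birkhoff's theorem the resulting arcs contain a permutation of
at least average weight (`exists_heavy_perm`). The orientation guarantees that an edge
is not used in both directions, so its profit is counted once.

The chosen arcs form a partial injection of the boxes, which extends to a permutation. For every
permutation the boxes can be placed so that each moved box touches its image
(`exists_representation_perm`): each cycle is laid out in two rows, one above and one below a
horizontal line, cut so that the two rows overlap properly at both ends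
(`exists_cycle_placement`), and the cycles are put side by side.
-/

open Set

/-! ### Touching and disjoint boxes -/

lemma Touches.comm {A B : Set (ℝ × ℝ)} (hAB : Touches A B) : Touches B A := by
  obtain ⟨p, q, hpq, hs⟩ := hAB
  exact ⟨p, q, hpq, by rw [inter_comm, hs]⟩

/-- A box touches the box whose left side lies on the line through its right side, provided
the two vertical sides overlap. -/
lemma touches_side {x y w h x' y' w' h' : ℝ} (hw : 0 < w) (hw' : 0 < w') (hx : x + w = x')
    (hy : max y y' < min (y + h) (y' + h')) :
    Touches (pBox (x, y) w h) (pBox (x', y') w' h') := by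
  refine ⟨(x', max y y'), (x', min (y + h) (y' + h')), ?_, ?_⟩
  · intro he
    exact hy.ne (congrArg Prod.snd he)
  · rw [← Prod.image_mk_segment_right, segment_eq_Icc hy.le]
    ext ⟨u, v⟩
    simp only [pBox, mem_inter_iff, mem_prod, mem_Icc, mem_image, Prod.mk.injEq, max_le_iff,
      le_min_iff]
    constructor
    · rintro ⟨⟨⟨h1, h2⟩, h3, h4⟩, ⟨h5, h6⟩, h7, h8⟩
      exact ⟨v, ⟨⟨h3, h7⟩, h4, h8⟩, by linarith, rfl⟩
    · rintro ⟨v', ⟨⟨h3, h7⟩, h4, h8⟩, rfl, rfl⟩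
      exact ⟨⟨⟨by linarith, by linarith⟩, h3, h4⟩, ⟨by linarith, by linarith⟩, h7, h8⟩

/-- A box touches the box whose top side lies on the line through its bottom side, provided
the two horizontal sides overlap. -/
lemma touches_stack {x y w h x' y' w' h' : ℝ} (hh : 0 < h) (hh' : 0 < h') (hy : y' + h' = y)
    (hx : max x x' < min (x + w) (x' + w')) :
    Touches (pBox (x, y) w h) (pBox (x', y') w' h') := by
  refine ⟨(max x x', y), (min (x + w) (x' + w'), y), ?_, ?_⟩
  · intro he
    exact hx.ne (congrArg Prod.fst he)
  · rw [← Prod.image_mk_segment_left, segment_eq_Icc hx.le]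
    ext ⟨u, v⟩
    simp only [pBox, mem_inter_iff, mem_prod, mem_Icc, mem_image, Prod.mk.injEq, max_le_iff,
      le_min_iff]
    constructor
    · rintro ⟨⟨⟨h1, h2⟩, h3, h4⟩, ⟨h5, h6⟩, h7, h8⟩
      exact ⟨u, ⟨⟨h1, h5⟩, h2, h6⟩, rfl, by linarith⟩
    · rintro ⟨v', ⟨⟨h3, h7⟩, h4, h8⟩, rfl, rfl⟩
      exact ⟨⟨⟨h3, h4⟩, by linarith, by linarith⟩, ⟨h7, h8⟩, by linarith, by linarith⟩

lemma disjoint_of_x {P Q : ℝ × ℝ} {w h w' h' : ℝ} (hx : P.1 + w ≤ Q.1) :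
    Disjoint (pBoxInt P w h) (pBoxInt Q w' h') := by
  rw [Set.disjoint_left]
  rintro ⟨u, v⟩ ⟨⟨-, h1⟩, -⟩ ⟨⟨h2, -⟩, -⟩
  dsimp only at h1 h2
  linarith

lemma disjoint_of_y {P Q : ℝ × ℝ} {w h w' h' : ℝ} (hy : Q.2 + h' ≤ P.2) :
    Disjoint (pBoxInt P w h) (pBoxInt Q w' h') := by
  rw [Set.disjoint_left]
  rintro ⟨u, v⟩ ⟨-, h1, -⟩ ⟨-, -, h2⟩
  dsimp only at h1 h2
  linarith

lemma disjoint_shift {P Q : ℝ × ℝ} {w h w' h' c : ℝ}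
    (hd : Disjoint (pBoxInt P w h) (pBoxInt Q w' h')) :
    Disjoint (pBoxInt (P + (c, 0)) w h) (pBoxInt (Q + (c, 0)) w' h') := by
  rw [Set.disjoint_left] at hd ⊢
  rintro ⟨u, v⟩ ⟨⟨h1, h2⟩, h3, h4⟩ ⟨⟨h5, h6⟩, h7, h8⟩
  simp only [Prod.fst_add, Prod.snd_add, add_zero] at h1 h2 h3 h4 h5 h6 h7 h8
  exact @hd (u - c, v) ⟨⟨by linarith, by dsimp only; linarith⟩, h3, h4⟩
    ⟨⟨by linarith, by dsimp only; linarith⟩, h7, h8⟩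

lemma touches_shift {P Q : ℝ × ℝ} {w h w' h' c : ℝ}
    (ht : Touches (pBox P w h) (pBox Q w' h')) :
    Touches (pBox (P + (c, 0)) w h) (pBox (Q + (c, 0)) w' h') := by
  obtain ⟨p, q, hpq, hs⟩ := ht
  refine ⟨(c, 0) + p, (c, 0) + q, by simpa using hpq, ?_⟩
  rw [← segment_translate_image, ← hs]
  ext ⟨u, v⟩
  simp only [pBox, mem_inter_iff, mem_prod, mem_Icc, mem_image, Prod.exists, Prod.fst_add,
    Prod.snd_add, Prod.mk_add_mk, Prod.mk.injEq, add_zero, zero_add]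
  constructor
  · rintro ⟨⟨⟨h1, h2⟩, h3, h4⟩, ⟨h5, h6⟩, h7, h8⟩
    exact ⟨u - c, v, ⟨⟨⟨by linarith, by linarith⟩, h3, h4⟩, ⟨by linarith, by linarith⟩, h7, h8⟩,
      by ring, rfl⟩
  · rintro ⟨u', v', ⟨⟨⟨h1, h2⟩, h3, h4⟩, ⟨h5, h6⟩, h7, h8⟩, rfl, rfl⟩
    exact ⟨⟨⟨by linarith, by linarith⟩, h3, h4⟩, ⟨by linarith, by linarith⟩, h7, h8⟩

/-! ### Placing the cycles of a permutation -/

/-- Any cyclic sequence of at least two boxes can be placed with consecutive boxes touching.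
The boxes `0, …, a - 1` stand from left to right on the line `y = 0`, and the boxes
`m - 1, m - 2, …, a` hang from left to right below it. The cut `a` is the first index at which
the upper row is so long that the box `a` of the lower row starts before the upper row ends, and
the lower row is shifted right by a small `ε` so that contacts at a corner become proper. -/
lemma exists_cycle_placement (m : ℕ) (hm : 2 ≤ m) (u v : ℕ → ℝ) (hu : ∀ k, 0 < u k)
    (hv : ∀ k, 0 < v k) :
    ∃ P : ℕ → ℝ × ℝ,
      (∀ j < m, ∀ k < m, j ≠ k → Disjoint (pBoxInt (P j) (u j) (v j)) (pBoxInt (P k) (u k) (v k))) ∧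
      (∀ k, k + 1 < m →
        Touches (pBox (P k) (u k) (v k)) (pBox (P (k + 1)) (u (k + 1)) (v (k + 1)))) ∧
      Touches (pBox (P (m - 1)) (u (m - 1)) (v (m - 1))) (pBox (P 0) (u 0) (v 0)) := by
  classical
  set S : ℕ → ℝ := fun k => ∑ i ∈ Finset.range k, u i with hS
  have hS0 : S 0 = 0 := by simp [hS]
  have hSs : ∀ k, S (k + 1) = S k + u k := fun k => Finset.sum_range_succ _ _
  have hmono : StrictMono S := strictMono_nat_of_lt_succ fun k => by
    rw [hSs]; linarith [hu k]
  have hex : ∃ a, S m < S a + S (a + 1) := by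
    refine ⟨m, ?_⟩
    have := hmono (show 0 < m + 1 by omega)
    linarith
  have hspec := Nat.find_spec hex
  set a := Nat.find hex with ha
  have ha0 : a ≠ 0 := by
    intro h0
    rw [h0, hS0] at hspec
    have := hmono.monotone (show 0 + 1 ≤ m by omega)
    linarith
  have ham : a ≤ m - 1 := by
    apply Nat.find_min'
    rw [Nat.sub_add_cancel (by omega)]
    have := hmono (show 0 < m - 1 by omega)
    linarith
  have hpred : S (a - 1) + S a ≤ S m := by
    have := Nat.find_min hex (show a - 1 < Nat.find hex by omega)
    rw [Nat.sub_add_cancel (by omega)] at this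
    exact not_lt.1 this
  obtain ⟨ε, hε, hεlt⟩ := exists_between (show 0 < min (u 0) (S a + S (a + 1) - S m) from
    lt_min (hu 0) (by linarith))
  obtain ⟨hε1, hε2⟩ := lt_min_iff.1 hεlt
  set P : ℕ → ℝ × ℝ := fun k => if k < a then (S k, 0) else (S m - S (k + 1) + ε, - v k) with hP
  have hPt : ∀ k, k < a → P k = (S k, 0) := fun k hk => if_pos hk
  have hPb : ∀ k, a ≤ k → P k = (S m - S (k + 1) + ε, - v k) := fun k hk =>
    if_neg (not_lt.2 hk)
  have hdisj : ∀ j k, j < k →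
      Disjoint (pBoxInt (P j) (u j) (v j)) (pBoxInt (P k) (u k) (v k)) := by
    intro j k hjk
    have hle := hmono.monotone (Nat.succ_le_of_lt hjk)
    rw [Nat.succ_eq_add_one] at hle
    rcases lt_or_ge k a with hk | hk
    · rw [hPt j (by omega), hPt k hk]
      exact disjoint_of_x (by simpa [← hSs] using hle)
    · rcases lt_or_ge j a with hj | hj
      · rw [hPt j hj, hPb k hk]
        exact disjoint_of_y (by simp)
      · rw [hPb j hj, hPb k hk]
        refine (disjoint_of_x ?_).symm
        dsimp only
        linarith [hSs k]
  refine ⟨P, ?_, ?_, ?_⟩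
  · intro j _ k _ hjk
    rcases lt_or_gt_of_ne hjk with hlt | hlt
    · exact hdisj j k hlt
    · exact (hdisj k j hlt).symm
  · intro k hk
    have hv1 := hv k
    have hv2 := hv (k + 1)
    have hu1 := hu k
    have hu2 := hu (k + 1)
    have hs1 := hSs k
    have hs2 := hSs (k + 1)
    rcases lt_trichotomy (k + 1) a with hka | hka | hka
    · rw [hPt k (by omega), hPt _ hka]
      refine touches_side hu1 hu2 (hSs k).symm ?_
      simp only [max_lt_iff, lt_min_iff]
      refine ⟨⟨?_, ?_⟩, ?_, ?_⟩ <;> linarith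
    · rw [hPt k (by omega), hPb _ hka.ge]
      rw [← hka] at hpred hspec hε2
      rw [Nat.add_sub_cancel] at hpred
      refine touches_stack hv1 hv2 (by ring) ?_
      simp only [max_lt_iff, lt_min_iff]
      refine ⟨⟨?_, ?_⟩, ?_, ?_⟩ <;> linarith
    · rw [hPb k (by omega), hPb _ hka.le]
      refine (touches_side hu2 hu1 (by linarith) ?_).comm
      simp only [max_lt_iff, lt_min_iff]
      refine ⟨⟨?_, ?_⟩, ?_, ?_⟩ <;> linarith
  · rw [hPb _ ham, hPt 0 (by omega)]
    refine (touches_stack (hv 0) (hv _) (by ring) ?_).comm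
    have hum := hu (m - 1)
    have hu0 := hu 0
    rw [Nat.sub_add_cancel (by omega), hS0]
    simp only [max_lt_iff, lt_min_iff]
    refine ⟨⟨?_, ?_⟩, ?_, ?_⟩ <;> linarith

/-- Two placements can be glued along any bipartition of the boxes, by pushing the second one
far to the right. -/
lemma exists_glue {n : ℕ} (w h : Fin n → ℝ) (S : Set (Fin n)) (pos₁ pos₂ : Fin n → ℝ × ℝ) :
    ∃ pos : Fin n → ℝ × ℝ, ∃ c : ℝ, (∀ i ∈ S, pos i = pos₁ i) ∧
      (∀ i ∉ S, pos i = pos₂ i + (c, 0)) ∧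
      ∀ i ∈ S, ∀ j ∉ S, Disjoint (pBoxInt (pos i) (w i) (h i)) (pBoxInt (pos j) (w j) (h j)) := by
  classical
  obtain ⟨M, hM⟩ := (Set.finite_range fun i => (pos₁ i).1 + w i).bddAbove
  obtain ⟨L, hL⟩ := (Set.finite_range fun i => (pos₂ i).1).bddBelow
  refine ⟨fun i => if i ∈ S then pos₁ i else pos₂ i + (M - L, 0), M - L,
    fun i hi => if_pos hi, fun i hi => if_neg hi, fun i hi j hj => ?_⟩
  dsimp only
  rw [if_pos hi, if_neg hj]
  apply disjoint_of_x
  have h1 : (pos₁ i).1 + w i ≤ M := hM ⟨i, rfl⟩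
  have h2 : L ≤ (pos₂ j).1 := hL ⟨j, rfl⟩
  simp only [Prod.fst_add]
  linarith

/-- The boxes moved by a permutation can be placed so that each touches its image. -/
lemma exists_placement_support {n : ℕ} (w h : Fin n → ℝ) (hw : ∀ i, 0 < w i) (hh : ∀ i, 0 < h i)
    (σ : Equiv.Perm (Fin n)) :
    ∃ pos : Fin n → ℝ × ℝ,
      (∀ i ∈ σ.support, ∀ j ∈ σ.support, i ≠ j →
        Disjoint (pBoxInt (pos i) (w i) (h i)) (pBoxInt (pos j) (w j) (h j))) ∧
      ∀ i ∈ σ.support, Touches (pBox (pos i) (w i) (h i)) (pBox (pos (σ i)) (w (σ i)) (h (σ i))) := by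
  classical
  induction σ using Equiv.Perm.cycle_induction_on with
  | base_one => exact ⟨fun _ => 0, by simp, by simp⟩
  | base_cycles σ hσ =>
    obtain ⟨x, hx⟩ := hσ.nonempty_support
    have hon : σ.IsCycleOn (σ.support : Set (Fin n)) := by
      convert hσ.isCycleOn using 1
      ext i
      simp
    have hm : 2 ≤ σ.support.card := hσ.two_le_card_support
    have hidx : ∀ i, ∃ k, i ∈ σ.support → k < σ.support.card ∧ (σ ^ k) x = i := by
      intro i
      by_cases hi : i ∈ σ.support
      · obtain ⟨k, hk, he⟩ := hon.exists_pow_eq hx hi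
        exact ⟨k, fun _ => ⟨hk, he⟩⟩
      · exact ⟨0, fun h' => absurd h' hi⟩
    choose idx hidx using hidx
    obtain ⟨P, hd, ht, hlast⟩ := exists_cycle_placement σ.support.card hm
      (fun k => w ((σ ^ k) x)) (fun k => h ((σ ^ k) x)) (fun _ => hw _) (fun _ => hh _)
    refine ⟨fun i => P (idx i), ?_, ?_⟩
    · intro i hi j hj hij
      obtain ⟨hi1, hi2⟩ := hidx i hi
      obtain ⟨hj1, hj2⟩ := hidx j hj
      have := hd _ hi1 _ hj1 (fun he => hij (by rw [← hi2, ← hj2, he]))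
      simpa only [hi2, hj2] using this
    · intro i hi
      have hsi : σ i ∈ σ.support := Equiv.Perm.apply_mem_support.2 hi
      obtain ⟨hi1, hi2⟩ := hidx i hi
      obtain ⟨hj1, hj2⟩ := hidx _ hsi
      have hnext : (σ ^ (idx i + 1)) x = σ i := by
        rw [pow_succ', Equiv.Perm.mul_apply, hi2]
      rcases lt_or_ge (idx i + 1) σ.support.card with hlt | hge
      · have he : idx (σ i) = idx i + 1 := by
          have := (hon.pow_apply_eq_pow_apply hx).1 (hj2.trans hnext.symm)
          exact Nat.ModEq.eq_of_lt_of_lt this hj1 hlt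
        have := ht _ hlt
        simp only [hi2, hnext] at this
        simpa only [he] using this
      · have he : idx i = σ.support.card - 1 := by omega
        have hmod : (σ ^ (idx i + 1)) x = x := by
          rw [show idx i + 1 = σ.support.card by omega]
          exact hon.pow_card_apply hx
        have he' : idx (σ i) = 0 := by
          have : (σ ^ idx (σ i)) x = (σ ^ 0) x := by
            rw [hj2, ← hnext, hmod, pow_zero, Equiv.Perm.one_apply]
          have := (hon.pow_apply_eq_pow_apply hx).1 this
          exact Nat.ModEq.eq_of_lt_of_lt this hj1 (by omega)
        have hxs : (σ ^ 0) x = σ i := by rw [← hnext, hmod]; rfl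
        rw [← he] at hlast
        simp only [hi2, hxs] at hlast
        simpa only [he'] using hlast
  | induction_disjoint σ τ hdis _ hσ hτ =>
    obtain ⟨pos₁, hd₁, ht₁⟩ := hσ
    obtain ⟨pos₂, hd₂, ht₂⟩ := hτ
    obtain ⟨pos, c, hp₁, hp₂, hcross⟩ := exists_glue w h (σ.support : Set (Fin n)) pos₁ pos₂
    simp only [Finset.mem_coe] at hp₁ hp₂ hcross
    have hsd := Equiv.Perm.disjoint_iff_disjoint_support.1 hdis
    have hmem : ∀ i ∈ (σ * τ).support, i ∉ σ.support → i ∈ τ.support := by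
      intro i hi hi'
      rw [hdis.support_mul, Finset.mem_union] at hi
      exact hi.resolve_left hi'
    refine ⟨pos, ?_, ?_⟩
    · intro i hi j hj hij
      by_cases h1 : i ∈ σ.support <;> by_cases h2 : j ∈ σ.support
      · rw [hp₁ i h1, hp₁ j h2]
        exact hd₁ i h1 j h2 hij
      · exact hcross i h1 j h2
      · exact (hcross j h2 i h1).symm
      · rw [hp₂ i h1, hp₂ j h2]
        exact disjoint_shift (hd₂ i (hmem i hi h1) j (hmem j hj h2) hij)
    · intro i hi
      by_cases h1 : i ∈ σ.support
      · have hfix : τ i = i := Equiv.Perm.notMem_support.1 (Finset.disjoint_left.1 hsd h1)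
        rw [Equiv.Perm.mul_apply, hfix, hp₁ i h1, hp₁ _ (Equiv.Perm.apply_mem_support.2 h1)]
        exact ht₁ i h1
      · have h2 := hmem i hi h1
        have h3 : τ i ∉ σ.support :=
          Finset.disjoint_right.1 hsd (Equiv.Perm.apply_mem_support.2 h2)
        rw [Equiv.Perm.mul_apply, Equiv.Perm.notMem_support.1 h3, hp₂ i h1, hp₂ _ h3]
        exact touches_shift (ht₂ i h2)

/-- Every permutation of the boxes has a representation in which each moved box touches its
image. -/
lemma exists_representation_perm {n : ℕ} (w h : Fin n → ℝ) (hw : ∀ i, 0 < w i)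
    (hh : ∀ i, 0 < h i) (σ : Equiv.Perm (Fin n)) :
    ∃ pos : Fin n → ℝ × ℝ, IsRepresentation w h pos ∧
      ∀ i, σ i ≠ i → Touches (pBox (pos i) (w i) (h i)) (pBox (pos (σ i)) (w (σ i)) (h (σ i))) := by
  obtain ⟨pos₁, hd₁, ht₁⟩ := exists_placement_support w h hw hh σ
  -- The fixed boxes are stacked into a tower with generous spacing.
  set H : ℝ := ∑ i, h i with hH
  have hle : ∀ i, h i ≤ H := fun i =>
    Finset.single_le_sum (fun j _ => (hh j).le) (Finset.mem_univ i)
  have hd₂ : ∀ i j : Fin n, j < i → Disjoint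
      (pBoxInt ((0, (i : ℕ) * H) : ℝ × ℝ) (w i) (h i)) (pBoxInt (0, (j : ℕ) * H) (w j) (h j)) := by
    intro i j hij
    apply disjoint_of_y
    have h1 : ((j : ℕ) : ℝ) + 1 ≤ ((i : ℕ) : ℝ) := by exact_mod_cast hij
    have h2 := hle j
    have h3 := hh j
    dsimp only
    nlinarith
  obtain ⟨pos, c, hp₁, hp₂, hcross⟩ := exists_glue w h (σ.support : Set (Fin n)) pos₁
    (fun i => (0, (i : ℕ) * H))
  simp only [Finset.mem_coe] at hp₁ hp₂ hcross
  refine ⟨pos, ?_, ?_⟩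
  · intro i j hij
    by_cases h1 : i ∈ σ.support <;> by_cases h2 : j ∈ σ.support
    · rw [hp₁ i h1, hp₁ j h2]
      exact hd₁ i h1 j h2 hij
    · exact hcross i h1 j h2
    · exact (hcross j h2 i h1).symm
    · rw [hp₂ i h1, hp₂ j h2]
      apply disjoint_shift
      rcases lt_or_gt_of_ne hij with hlt | hlt
      · exact (hd₂ j i hlt).symm
      · exact hd₂ i j hlt
  · intro i hi
    have h1 : i ∈ σ.support := Equiv.Perm.mem_support.2 hi
    rw [hp₁ i h1, hp₁ _ (Equiv.Perm.apply_mem_support.2 h1)]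
    exact ht₁ i h1

/-! ### A heavy subgraph of maximum degree two -/

/-- A `2k`-regular multigraph has an orientation with all in- and out-degrees equal to `k`. The
multigraph has edge set `E` and endpoint maps `a`, `b`; the orientation is given by the tail map `t`
and the head map `d`. Hall's theorem assigns to the edges distinct pairs of one of their endpoints
and one of `k` slots; the chosen endpoint is the tail. -/
lemma exists_balanced_orientation {V E : Type*} [Fintype V] [DecidableEq V] [Fintype E]
    (k : ℕ) (a b : E → V)
    (hreg : ∀ v, (Finset.univ.filter fun e => a e = v).card +
      (Finset.univ.filter fun e => b e = v).card = 2 * k) :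
    ∃ t d : E → V, (∀ e, (t e = a e ∧ d e = b e) ∨ (t e = b e ∧ d e = a e)) ∧
      (∀ v, (Finset.univ.filter fun e => t e = v).card = k) ∧
      ∀ v, (Finset.univ.filter fun e => d e = v).card = k := by
  classical
  have hall : ∀ s : Finset E,
      s.card ≤ (s.biUnion fun e => ({a e, b e} : Finset V) ×ˢ (Finset.univ : Finset (Fin k))).card := by
    intro s
    set N : Finset V := s.biUnion fun e => {a e, b e} with hN
    have heq : (s.biUnion fun e => ({a e, b e} : Finset V) ×ˢ (Finset.univ : Finset (Fin k))) =
        N ×ˢ Finset.univ := by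
      ext ⟨v, c⟩
      simp [hN]
    have ha : s.card = ∑ v ∈ N, (s.filter fun e => a e = v).card :=
      Finset.card_eq_sum_card_fiberwise fun e he =>
        Finset.mem_coe.2 (Finset.mem_biUnion.2 ⟨e, he, by simp⟩)
    have hb : s.card = ∑ v ∈ N, (s.filter fun e => b e = v).card :=
      Finset.card_eq_sum_card_fiberwise fun e he =>
        Finset.mem_coe.2 (Finset.mem_biUnion.2 ⟨e, he, by simp⟩)
    have hle : ∑ v ∈ N, ((s.filter fun e => a e = v).card + (s.filter fun e => b e = v).card) ≤
        ∑ v ∈ N, 2 * k := by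
      refine Finset.sum_le_sum fun v _ => ?_
      rw [← hreg v]
      gcongr <;> exact Finset.subset_univ _
    rw [Finset.sum_add_distrib, ← ha, ← hb, Finset.sum_const, smul_eq_mul] at hle
    rw [heq, Finset.card_product, Finset.card_univ, Fintype.card_fin]
    linarith
  obtain ⟨f, hf, hmem⟩ := (Finset.all_card_le_biUnion_card_iff_exists_injective _).1 hall
  have hmem' : ∀ e, (f e).1 = a e ∨ (f e).1 = b e := by
    intro e
    have := hmem e
    simpa using this
  set d : E → V := fun e => if (f e).1 = a e then b e else a e with hd
  have hor : ∀ e, ((f e).1 = a e ∧ d e = b e) ∨ ((f e).1 = b e ∧ d e = a e) := by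
    intro e
    by_cases h1 : (f e).1 = a e
    · exact Or.inl ⟨h1, if_pos h1⟩
    · exact Or.inr ⟨(hmem' e).resolve_left h1, if_neg h1⟩
  have hle : ∀ v, (Finset.univ.filter fun e => (f e).1 = v).card ≤ k := by
    intro v
    have := Finset.card_le_card_of_injOn (s := Finset.univ.filter fun e => (f e).1 = v)
      (t := (Finset.univ : Finset (Fin k))) (fun e => (f e).2)
      (fun _ _ => Finset.mem_coe.2 (Finset.mem_univ _)) (by
        intro e he e' he' hee
        simp only [Finset.coe_filter, Finset.mem_univ, true_and, mem_ofPred_eq] at he he'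
        exact hf (Prod.ext (he.trans he'.symm) hee))
    simpa using this
  have hfib : ∀ g : E → V, ∑ v, (Finset.univ.filter fun e => g e = v).card = Fintype.card E :=
    fun g => (Finset.card_eq_sum_card_fiberwise fun e _ =>
      Finset.mem_coe.2 (Finset.mem_univ (g e))).symm
  -- Doubly counting the incidences gives `|E| = k |V|`, which forces equality in `hle`.
  have htot : ∑ v, (Finset.univ.filter fun e => (f e).1 = v).card = ∑ _v : V, k := by
    have h1 : ∑ v, ((Finset.univ.filter fun e => a e = v).card +
        (Finset.univ.filter fun e => b e = v).card) = ∑ _v : V, 2 * k :=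
      Finset.sum_congr rfl fun v _ => hreg v
    rw [Finset.sum_add_distrib, hfib, hfib, ← Finset.mul_sum] at h1
    rw [hfib]
    omega
  have ht : ∀ v, (Finset.univ.filter fun e => (f e).1 = v).card = k := fun v =>
    (Finset.sum_eq_sum_iff_of_le fun v _ => hle v).1 htot v (Finset.mem_univ v)
  refine ⟨fun e => (f e).1, d, hor, ht, fun v => ?_⟩
  have hsum : (Finset.univ.filter fun e => (f e).1 = v).card +
      (Finset.univ.filter fun e => d e = v).card = 2 * k := by
    rw [← hreg v]
    simp only [Finset.card_filter, ← Finset.sum_add_distrib]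
    refine Finset.sum_congr rfl fun e _ => ?_
    rcases hor e with ⟨h1, h2⟩ | ⟨h1, h2⟩
    · rw [h1, h2]
    · rw [h1, h2, add_comm]
  have := ht v
  omega

/-- A directed multigraph with all in- and out-degrees equal to `k` contains a permutation of its
vertices, consisting of arcs, whose weight is at least the average `1/k` of the total weight: by
Birkhoff's theorem the normalized adjacency matrix is a convex combination of permutation
matrices. -/
lemma exists_heavy_perm {V E : Type*} [Fintype V] [DecidableEq V] [Fintype E]
    (k : ℕ) (hk : 0 < k) (t d : E → V)
    (ht : ∀ v, (Finset.univ.filter fun e => t e = v).card = k)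
    (hd : ∀ v, (Finset.univ.filter fun e => d e = v).card = k) (c : V → V → ℝ) :
    ∃ σ : Equiv.Perm V, (∀ u, ∃ e, t e = u ∧ d e = σ u) ∧
      ∑ e, c (t e) (d e) ≤ k * ∑ u, c u (σ u) := by
  classical
  have hk' : (0 : ℝ) < k := by exact_mod_cast hk
  set A : Matrix V V ℝ := fun u v => ∑ e, if t e = u ∧ d e = v then (k : ℝ)⁻¹ else 0 with hA
  have hA0 : ∀ u v, 0 ≤ A u v := fun u v => Finset.sum_nonneg fun e _ => by
    split_ifs <;> positivity
  have hmem : A ∈ doublyStochastic ℝ V := by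
    rw [mem_doublyStochastic_iff_sum]
    refine ⟨hA0, fun u => ?_, fun v => ?_⟩
    · simp only [hA]
      rw [Finset.sum_comm]
      simp only [ite_and, Finset.sum_ite_irrel, Finset.sum_ite_eq, Finset.mem_univ, if_true,
        Finset.sum_const_zero]
      rw [← Finset.sum_filter, Finset.sum_const, ht, nsmul_eq_mul, mul_inv_cancel₀ hk'.ne']
    · simp only [hA]
      rw [Finset.sum_comm]
      simp only [ite_and, Finset.sum_ite_eq, Finset.mem_univ, if_true]
      rw [← Finset.sum_filter, Finset.sum_const, hd, nsmul_eq_mul, mul_inv_cancel₀ hk'.ne']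
  obtain ⟨w, hw0, hw1, hwA⟩ := exists_eq_sum_perm_of_mem_doublyStochastic hmem
  have hentry : ∀ u v, A u v = ∑ σ, w σ * if σ u = v then 1 else 0 := by
    intro u v
    rw [← hwA, Matrix.sum_apply]
    refine Finset.sum_congr rfl fun σ _ => ?_
    simp [PEquiv.toMatrix_apply, Equiv.toPEquiv_apply]
  have hval : ∑ e, c (t e) (d e) = ∑ σ, w σ * (k * ∑ u, c u (σ u)) := by
    have h1 : ∑ u, ∑ v, A u v * c u v = ∑ e, (k : ℝ)⁻¹ * c (t e) (d e) := by
      simp only [hA, Finset.sum_mul, ite_mul, zero_mul]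
      have : ∀ u, (∑ v, ∑ e, if t e = u ∧ d e = v then (k : ℝ)⁻¹ * c u v else 0) =
          ∑ e, if t e = u then (k : ℝ)⁻¹ * c u (d e) else 0 := by
        intro u
        rw [Finset.sum_comm]
        simp only [ite_and, Finset.sum_ite_irrel, Finset.sum_ite_eq, Finset.mem_univ, if_true,
          Finset.sum_const_zero]
      simp only [this]
      rw [Finset.sum_comm]
      simp
    have h2 : ∑ u, ∑ v, A u v * c u v = ∑ σ, w σ * ∑ u, c u (σ u) := by
      simp only [hentry, Finset.sum_mul, Finset.mul_sum]
      have : ∀ u, (∑ v, ∑ σ : Equiv.Perm V, w σ * (if σ u = v then 1 else 0) * c u v) =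
          ∑ σ : Equiv.Perm V, w σ * c u (σ u) := by
        intro u
        rw [Finset.sum_comm]
        simp
      simp only [this]
      rw [Finset.sum_comm]
    rw [← Finset.mul_sum, h2] at h1
    have h3 : ∑ e, c (t e) (d e) = k * ∑ σ, w σ * ∑ u, c u (σ u) := by
      rw [h1, mul_inv_cancel_left₀ hk'.ne']
    rw [h3, Finset.mul_sum]
    exact Finset.sum_congr rfl fun σ _ => by ring
  have hex : ∃ σ, 0 < w σ ∧ ∑ e, c (t e) (d e) ≤ k * ∑ u, c u (σ u) := by
    by_contra! hcon
    have hle : ∀ σ ∈ (Finset.univ : Finset (Equiv.Perm V)),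
        w σ * (k * ∑ u, c u (σ u)) ≤ w σ * ∑ e, c (t e) (d e) := by
      intro σ _
      rcases (hw0 σ).eq_or_lt with h0 | h0
      · simp [← h0]
      · exact mul_le_mul_of_nonneg_left (hcon σ h0).le h0.le
    obtain ⟨σ₀, -, hσ₀⟩ : ∃ σ ∈ (Finset.univ : Finset (Equiv.Perm V)), 0 < w σ := by
      apply Finset.exists_lt_of_sum_lt
      rw [hw1]
      simp
    have := Finset.sum_lt_sum hle ⟨σ₀, Finset.mem_univ _,
      mul_lt_mul_of_pos_left (hcon σ₀ hσ₀) hσ₀⟩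
    rw [← hval, ← Finset.sum_mul, hw1, one_mul] at this
    exact lt_irrefl _ this
  obtain ⟨σ, hσ, hle⟩ := hex
  refine ⟨σ, fun u => ?_, hle⟩
  have hpos : 0 < A u (σ u) := by
    rw [hentry]
    refine Finset.sum_pos' (fun τ _ => mul_nonneg (hw0 τ) (by split_ifs <;> norm_num))
      ⟨σ, Finset.mem_univ _, by simpa using hσ⟩
  by_contra! hcon
  refine hpos.ne' (Finset.sum_eq_zero fun e _ => if_neg fun h => ?_)
  exact hcon e h.1 h.2

open scoped Classical in
/-- A weighted graph of maximum degree at most `2k` contains a subgraph of at least `1/k` of the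
total weight that has an orientation with all in- and out-degrees at most one. The subgraph consists
of the arcs `i → g i`, `i ∈ D`; the last clause says that no edge occurs in both directions.

To get a regular multigraph, two copies of the graph are taken and the two copies of each vertex are
joined by as many parallel edges as are missing to degree `2k`. -/
lemma exists_heavy_linear {n : ℕ} (k : ℕ) (hk : 0 < k)
    (p : Fin n → Fin n → ℝ) (hsym : ∀ i j, p i j = p j i) (hp : ∀ i j, 0 ≤ p i j)
    (hdeg : ∀ i : Fin n, (Finset.univ.filter fun j : Fin n => j ≠ i ∧ 0 < p i j).card ≤ 2 * k) :
    ∃ (D : Finset (Fin n)) (g : Fin n → Fin n), Set.InjOn g D ∧ (∀ i ∈ D, g i ≠ i) ∧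
      (∀ i ∈ D, g i ∈ D → g (g i) ≠ i) ∧
      (∑ i : Fin n, ∑ j : Fin n, if i < j then p i j else 0) ≤ k * ∑ i ∈ D, p i (g i) := by
  set deg : Fin n → ℕ := fun i => (Finset.univ.filter fun j : Fin n => j ≠ i ∧ 0 < p i j).card
    with hdegdef
  let G := {q : Fin n × Fin n // q.1 < q.2 ∧ 0 < p q.1 q.2}
  let E := (G × Bool) ⊕ (Σ v : Fin n, Fin (2 * k - deg v))
  let a : E → Fin n × Bool := Sum.elim (fun x => (x.1.1.1, x.2)) (fun y => (y.1, false))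
  let b : E → Fin n × Bool := Sum.elim (fun x => (x.1.1.2, x.2)) (fun y => (y.1, true))
  have hG : ∀ {M : Type} [AddCommMonoid M] (F : Fin n → Fin n → M), ∑ q : G, F q.1.1 q.1.2 =
      ∑ i, ∑ j, if i < j ∧ 0 < p i j then F i j else 0 := by
    intro M _ F
    rw [← Fintype.sum_prod_type' (f := fun i j => if i < j ∧ 0 < p i j then F i j else 0),
      ← Finset.sum_filter]
    exact (Finset.sum_subtype (p := fun q : Fin n × Fin n => q.1 < q.2 ∧ 0 < p q.1 q.2) _
      (by simp) (fun q => F q.1 q.2)).symm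
  have hE : ∀ {M : Type} [AddCommMonoid M] (F : E → M), ∑ e, F e =
      (∑ q : G, ∑ s : Bool, F (Sum.inl (q, s))) +
        ∑ v : Fin n, ∑ x : Fin (2 * k - deg v), F (Sum.inr ⟨v, x⟩) := by
    intro M _ F
    rw [Fintype.sum_sum_type, Fintype.sum_prod_type, Fintype.sum_sigma]
  have hdegG : ∀ v, (∑ q : G, if q.1.1 = v then 1 else 0) + (∑ q : G, if q.1.2 = v then 1 else 0) =
      deg v := by
    intro v
    rw [hG (fun i _ => if i = v then 1 else 0), hG (fun _ j => if j = v then 1 else 0)]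
    have h1 : (∑ i : Fin n, ∑ j : Fin n, if i < j ∧ 0 < p i j then (if i = v then 1 else 0) else 0)
        = ∑ j : Fin n, if v < j ∧ 0 < p v j then 1 else 0 := by
      rw [Finset.sum_eq_single v]
      · simp
      · intro i _ hi
        simp [hi]
      · simp
    have h2 : (∑ i : Fin n, ∑ j : Fin n, if i < j ∧ 0 < p i j then (if j = v then 1 else 0) else 0)
        = ∑ i : Fin n, if i < v ∧ 0 < p v i then 1 else 0 := by
      refine Finset.sum_congr rfl fun i _ => ?_
      rw [Finset.sum_eq_single v]
      · simp [hsym v i]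
      · intro j _ hj
        simp [hj]
      · simp
    rw [h1, h2, ← Finset.sum_add_distrib, hdegdef]
    simp only [Finset.card_filter]
    refine Finset.sum_congr rfl fun j _ => ?_
    rcases lt_trichotomy v j with hlt | rfl | hlt
    · simp [hlt, hlt.ne', hlt.not_gt]
    · simp
    · simp [hlt, hlt.ne, hlt.not_gt]
  have hreg : ∀ v, (Finset.univ.filter fun e => a e = v).card +
      (Finset.univ.filter fun e => b e = v).card = 2 * k := by
    rintro ⟨v, s⟩
    have h1 := hdegG v
    have h2 : deg v ≤ 2 * k := hdeg v
    have hcopy : ∀ r : G → Fin n, (∑ q : G, ∑ s' : Bool, if (r q, s') = (v, s) then 1 else 0) =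
        ∑ q : G, if r q = v then 1 else 0 := by
      intro r
      refine Finset.sum_congr rfl fun q _ => ?_
      by_cases hq : r q = v <;> simp [hq]
    have hdummy : ∀ s' : Bool, (∑ v' : Fin n, ∑ _x : Fin (2 * k - deg v'),
        if (v', s') = (v, s) then 1 else 0) = if s' = s then 2 * k - deg v else 0 := by
      intro s'
      rw [Finset.sum_eq_single v]
      · simp [Prod.ext_iff]
      · intro v' _ hv'
        simp [Prod.ext_iff, hv']
      · simp
    have ha : (Finset.univ.filter fun e => a e = (v, s)).card =
        (∑ q : G, if q.1.1 = v then 1 else 0) + if false = s then 2 * k - deg v else 0 := by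
      rw [Finset.card_filter, hE]
      exact congrArg₂ (· + ·) (hcopy fun q => q.1.1) (hdummy false)
    have hb : (Finset.univ.filter fun e => b e = (v, s)).card =
        (∑ q : G, if q.1.2 = v then 1 else 0) + if true = s then 2 * k - deg v else 0 := by
      rw [Finset.card_filter, hE]
      exact congrArg₂ (· + ·) (hcopy fun q => q.1.2) (hdummy true)
    rw [ha, hb]
    cases s <;> simp only [if_true, reduceCtorEq, if_false] <;> omega
  obtain ⟨t, d, hor, ht, hd⟩ := exists_balanced_orientation k a b hreg
  obtain ⟨σ, hσ, hle⟩ := exists_heavy_perm k hk t d ht hd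
    (fun u v => if v.2 = u.2 then p u.1 v.1 else 0)
  set W := ∑ i : Fin n, ∑ j : Fin n, if i < j then p i j else 0 with hW
  have hWG : ∑ q : G, p q.1.1 q.1.2 = W := by
    rw [hG, hW]
    refine Finset.sum_congr rfl fun i _ => Finset.sum_congr rfl fun j _ => ?_
    by_cases hij : i < j
    · rcases (hp i j).eq_or_lt with h0 | h0
      · simp [← h0]
      · simp [hij, h0]
    · simp [hij]
  have hleft : (∑ e, if (d e).2 = (t e).2 then p (t e).1 (d e).1 else 0) = 2 * W := by
    have h1 : ∀ e, (if (d e).2 = (t e).2 then p (t e).1 (d e).1 else 0) =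
        if (b e).2 = (a e).2 then p (a e).1 (b e).1 else 0 := by
      intro e
      rcases hor e with ⟨h1, h2⟩ | ⟨h1, h2⟩
      · rw [h1, h2]
      · rw [h1, h2, hsym (b e).1]
        exact if_congr eq_comm rfl rfl
    rw [Finset.sum_congr rfl fun e _ => h1 e, hE, ← hWG, Finset.mul_sum]
    have h2 : (∑ v : Fin n, ∑ x : Fin (2 * k - deg v),
        if (b (Sum.inr ⟨v, x⟩)).2 = (a (Sum.inr ⟨v, x⟩)).2 then
          p (a (Sum.inr ⟨v, x⟩)).1 (b (Sum.inr ⟨v, x⟩)).1 else 0) = 0 :=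
      Finset.sum_eq_zero fun v _ => Finset.sum_eq_zero fun x _ => if_neg (by simp [a, b])
    rw [h2, add_zero]
    refine Finset.sum_congr rfl fun q _ => ?_
    rw [Fintype.sum_bool]
    refine Eq.trans ?_ (two_mul _).symm
    exact congrArg₂ (· + ·) (if_pos rfl) (if_pos rfl)
  -- One of the two copies carries at least half of the weight of `σ`.
  have hs : ∃ s : Bool, W ≤ k * ∑ i, if (σ (i, s)).2 = s then p i (σ (i, s)).1 else 0 := by
    by_contra! hcon
    have h1 := hcon true
    have h2 := hcon false
    rw [hleft, Fintype.sum_prod_type_right, Fintype.sum_bool, mul_add] at hle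
    dsimp only at hle
    linarith
  obtain ⟨s, hs⟩ := hs
  have harc : ∀ i, (σ (i, s)).2 = s → ∃ q : G, t (Sum.inl (q, s)) = (i, s) ∧
      d (Sum.inl (q, s)) = ((σ (i, s)).1, s) ∧
      ((q.1.1 = i ∧ q.1.2 = (σ (i, s)).1) ∨ (q.1.2 = i ∧ q.1.1 = (σ (i, s)).1)) := by
    intro i hi
    obtain ⟨e, he1, he2⟩ := hσ (i, s)
    have he3 : d e = ((σ (i, s)).1, s) := by rw [he2]; exact Prod.ext rfl hi
    rcases e with ⟨q, s'⟩ | y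
    · have := hor (Sum.inl (q, s'))
      rw [he1, he3] at this
      simp only [a, b, Sum.elim_inl, Prod.mk.injEq] at this
      have hss : s' = s := by
        rcases this with h | h <;> exact h.1.2.symm
      subst hss
      refine ⟨q, he1, he3, ?_⟩
      rcases this with h | h
      · exact Or.inl ⟨h.1.1.symm, h.2.1.symm⟩
      · exact Or.inr ⟨h.1.1.symm, h.2.1.symm⟩
    · have := hor (Sum.inr y)
      rw [he1, he3] at this
      simp only [a, b, Sum.elim_inr, Prod.mk.injEq] at this
      rcases this with h | h
      · exact absurd (h.1.2.symm.trans h.2.2) (by simp)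
      · exact absurd (h.1.2.symm.trans h.2.2) (by simp)
  refine ⟨Finset.univ.filter fun i => (σ (i, s)).2 = s, fun i => (σ (i, s)).1, ?_, ?_, ?_, ?_⟩
  · intro i hi j hj hij
    simp only [Finset.coe_filter, Finset.mem_univ, true_and, mem_ofPred_eq] at hi hj
    have := σ.injective (Prod.ext hij (hi.trans hj.symm))
    exact congrArg Prod.fst this
  · intro i hi
    obtain ⟨q, -, -, h⟩ := harc i (Finset.mem_filter.1 hi).2
    have hlt := q.2.1
    dsimp only
    rcases h with ⟨h1, h2⟩ | ⟨h1, h2⟩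
    · rw [h1, h2] at hlt; exact hlt.ne'
    · rw [h1, h2] at hlt; exact hlt.ne
  · intro i hi hgi hback
    obtain ⟨q, hq1, hq2, h⟩ := harc i (Finset.mem_filter.1 hi).2
    obtain ⟨q', hq1', hq2', h'⟩ := harc _ (Finset.mem_filter.1 hgi).2
    dsimp only at hback
    rw [hback] at h' hq2'
    have hlt := q.2.1
    have hlt' := q'.2.1
    -- Both arcs come from the same edge, whose tail would have to be `i` as well as `g i`.
    have hqq : q = q' := by
      apply Subtype.ext
      rcases h with ⟨h1, h2⟩ | ⟨h1, h2⟩ <;> rcases h' with ⟨h3, h4⟩ | ⟨h3, h4⟩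
      · rw [h1, h2] at hlt
        rw [h3, h4] at hlt'
        exact absurd hlt hlt'.asymm
      · exact Prod.ext (h1.trans h4.symm) (h2.trans h3.symm)
      · exact Prod.ext (h2.trans h3.symm) (h1.trans h4.symm)
      · rw [h1, h2] at hlt
        rw [h3, h4] at hlt'
        exact absurd hlt hlt'.asymm
    subst hqq
    have hii : i = (σ (i, s)).1 := congrArg Prod.fst (hq1.symm.trans hq1')
    rcases h with ⟨h1, h2⟩ | ⟨h1, h2⟩
    · rw [h1, h2] at hlt
      exact hlt.ne hii
    · rw [h1, h2] at hlt
      exact hlt.ne hii.symm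
  · rw [Finset.sum_filter]
    exact hs

lemma exists_perm_extension {n : ℕ} (D : Finset (Fin n)) (g : Fin n → Fin n)
    (hg : Set.InjOn g D) : ∃ τ : Equiv.Perm (Fin n), ∀ i ∈ D, τ i = g i := by
  classical
  let e : {x // x ∈ (D : Set (Fin n))} ≃ {x // x ∈ g '' (D : Set (Fin n))} :=
    Equiv.Set.imageOfInjOn g D hg
  refine ⟨e.extendSubtype, fun i hi => ?_⟩
  rw [Equiv.extendSubtype_apply_of_mem e i (Finset.mem_coe.2 hi)]
  rfl

/-! ### The approximation bound -/

open scoped Classical in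
/-- If the supporting graph (pairs with positive profit) has maximum degree at most `Δ`,
then there is a representation with total profit at least `(2/(Δ+1)) · Σ_{i<j} p i j`. -/
theorem boundedDegree_approximation (n : ℕ) (Δ : ℕ) (hΔ : 1 ≤ Δ)
    (w h : Fin n → ℝ) (hw : ∀ i, 0 < w i) (hh : ∀ i, 0 < h i)
    (p : Fin n → Fin n → ℝ) (hsym : ∀ i j, p i j = p j i) (hp : ∀ i j, 0 ≤ p i j)
    (hdeg : ∀ i : Fin n, (Finset.univ.filter fun j : Fin n => j ≠ i ∧ 0 < p i j).card ≤ Δ) :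
    ∃ pos : Fin n → ℝ × ℝ, IsRepresentation w h pos ∧
      (2 / ((Δ : ℝ) + 1)) * (∑ i : Fin n, ∑ j : Fin n, if i < j then p i j else 0) ≤
        totalProfit p w h pos := by
  obtain ⟨D, g, hinj, hne, hanti, hW⟩ := exists_heavy_linear ((Δ + 1) / 2) (by omega) p hsym hp
    (fun i => (hdeg i).trans (by omega))
  obtain ⟨τ, hτ⟩ := exists_perm_extension D g hinj
  obtain ⟨pos, hrep, htouch⟩ := exists_representation_perm w h hw hh τ
  refine ⟨pos, hrep, ?_⟩
  set W := ∑ i : Fin n, ∑ j : Fin n, if i < j then p i j else 0 with hWdef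
  have htouch' : ∀ i ∈ D,
      Touches (pBox (pos i) (w i) (h i)) (pBox (pos (g i)) (w (g i)) (h (g i))) := by
    intro i hi
    have h1 := htouch i
    rw [hτ i hi] at h1
    exact h1 (hne i hi)
  have hnonneg : 0 ≤ ∑ i ∈ D, p i (g i) := Finset.sum_nonneg fun i _ => hp _ _
  have hprofit : ∑ i ∈ D, p i (g i) ≤ totalProfit p w h pos := by
    -- Since no edge occurs in both directions, sorting the endpoints of the arcs is injective.
    have hinj' : Set.InjOn (fun i => (min i (g i), max i (g i))) (D : Set (Fin n)) := by
      intro i hi j hj hij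
      simp only [Prod.mk.injEq] at hij
      obtain ⟨h1, h2⟩ := hij
      by_contra hcon
      have hswap : i = g j ∧ g i = j := by
        rcases le_total i (g i) with hle | hle <;> rcases le_total j (g j) with hle' | hle' <;>
          simp only [hle, hle', min_eq_left, min_eq_right, max_eq_left, max_eq_right] at h1 h2
        · exact absurd h1 hcon
        · exact ⟨h1, h2⟩
        · exact ⟨h2, h1⟩
        · exact absurd h2 hcon
      have hj' : g i ∈ D := by rw [hswap.2]; exact hj
      exact hanti i hi hj' (by rw [hswap.2, ← hswap.1])
    have hsum : ∑ i ∈ D, p i (g i) =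
        ∑ q ∈ D.image (fun i => (min i (g i), max i (g i))), p q.1 q.2 := by
      rw [Finset.sum_image hinj']
      refine Finset.sum_congr rfl fun i _ => ?_
      rcases le_total i (g i) with hle | hle
      · simp [hle]
      · simp [hle, hsym i]
    rw [hsum, totalProfit,
      ← Fintype.sum_prod_type' (f := fun i j => if i < j ∧ Touches (pBox (pos i) (w i) (h i))
        (pBox (pos j) (w j) (h j)) then p i j else 0), ← Finset.sum_filter]
    refine Finset.sum_le_sum_of_subset_of_nonneg ?_ fun q _ _ => hp _ _
    intro q hq
    obtain ⟨i, hi, rfl⟩ := Finset.mem_image.1 hq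
    refine Finset.mem_filter.2 ⟨Finset.mem_univ _, ?_⟩
    rcases lt_or_gt_of_ne (hne i hi) with hlt | hlt
    · simp only [min_eq_right hlt.le, max_eq_left hlt.le]
      exact ⟨hlt, (htouch' i hi).comm⟩
    · simp only [min_eq_left hlt.le, max_eq_right hlt.le]
      exact ⟨hlt, htouch' i hi⟩
  refine le_trans ?_ hprofit
  have hk : (((Δ + 1) / 2 : ℕ) : ℝ) ≤ ((Δ : ℝ) + 1) / 2 := by
    have h1 : (Δ + 1) / 2 * 2 ≤ Δ + 1 := Nat.div_mul_le_self _ _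
    have h2 : (((Δ + 1) / 2 : ℕ) : ℝ) * 2 ≤ (Δ : ℝ) + 1 := by exact_mod_cast h1
    linarith
  have hW' : W ≤ ((Δ : ℝ) + 1) / 2 * ∑ i ∈ D, p i (g i) :=
    hW.trans (mul_le_mul_of_nonneg_right hk hnonneg)
  have hΔ' : (0 : ℝ) < (Δ : ℝ) + 1 := by positivity
  calc 2 / ((Δ : ℝ) + 1) * W
      ≤ 2 / ((Δ : ℝ) + 1) * (((Δ : ℝ) + 1) / 2 * ∑ i ∈ D, p i (g i)) := by gcongr
    _ = ∑ i ∈ D, p i (g i) := by field_simp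
end
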